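/- Fix a real number Acc_AI with 1/2 < Acc_AI ≤ 1 and let S(t) denote the interval [1 − Acc_AI − t, 1 − Acc_AI + t] if 0 ≤ t ≤ 1 − Acc_AI, the interval [t + Acc_AI − 1, 1 − Acc_AI + t] if 1 − Acc_AI < t ≤ Acc_AI, and the interval [t + Acc_AI − 1, 1 + Acc_AI − t] if Acc_AI < t ≤ 1. Then for all A, x in [0, 1] one has x ∈ S(A) if and only if A ∈ S(x); that is, the correspondence between adherence level and attainable decision-making accuracy is its own inverse. -/

import Mathlib

/-!
Write `c = 1 - AccAI` for the error rate of the AI. The three cases of the definition of `S t` are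
exactly the ways to resolve the absolute values in `[|t - c|, 1 - |t + c - 1|]`. Hence `x ∈ S t`
says that `t`, `x` and `c` satisfy the three triangle inequalities and `t + x + c ≤ 2`, a condition
symmetric in `t` and `x`.
-/

section AttainableAccuracies

variable {R : Type*} [CommRing R] [LinearOrder R] {a t x : R}

/-- The attainable decision-making accuracies at adherence level `t` when the AI has accuracy `a`,
with the case distinction of the paper encoded by absolute values. -/
def attainableAccuracies (a t : R) : Set R :=
  Set.Icc |t - (1 - a)| (1 - |t - a|)

variable [IsStrictOrderedRing R]

theorem mem_attainableAccuracies_iff :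
    x ∈ attainableAccuracies a t ↔
      (t ≤ x + (1 - a) ∧ x ≤ t + (1 - a) ∧ 1 - a ≤ t + x) ∧ t + x + (1 - a) ≤ 2 := by
  rw [attainableAccuracies, Set.mem_Icc, le_sub_comm, abs_le, abs_le]
  constructor
  · rintro ⟨⟨_, _⟩, _, _⟩
    refine ⟨⟨?_, ?_, ?_⟩, ?_⟩ <;> linarith
  · rintro ⟨⟨_, _, _⟩, _⟩
    refine ⟨⟨?_, ?_⟩, ?_, ?_⟩ <;> linarith

theorem mem_attainableAccuracies_comm :
    x ∈ attainableAccuracies a t ↔ t ∈ attainableAccuracies a x := by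
  simp only [mem_attainableAccuracies_iff, add_comm t x]
  tauto

theorem attainableAccuracies_of_le_one_sub (ha : 1 - a ≤ a) (ht : t ≤ 1 - a) :
    attainableAccuracies a t = Set.Icc (1 - a - t) (1 - a + t) := by
  rw [attainableAccuracies, abs_of_nonpos (sub_nonpos.2 ht),
    abs_of_nonpos (sub_nonpos.2 (ht.trans ha))]
  congr 1 <;> ring

theorem attainableAccuracies_of_one_sub_le_of_le (hat : 1 - a ≤ t) (hta : t ≤ a) :
    attainableAccuracies a t = Set.Icc (t + a - 1) (1 - a + t) := by
  rw [attainableAccuracies, abs_of_nonneg (sub_nonneg.2 hat), abs_of_nonpos (sub_nonpos.2 hta)]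
  congr 1 <;> ring

theorem attainableAccuracies_of_le (ha : 1 - a ≤ a) (ht : a ≤ t) :
    attainableAccuracies a t = Set.Icc (t + a - 1) (1 + a - t) := by
  rw [attainableAccuracies, abs_of_nonneg (sub_nonneg.2 (ha.trans ht)),
    abs_of_nonneg (sub_nonneg.2 ht)]
  congr 1 <;> ring

theorem attainableAccuracies_eq_ite (ha : 1 - a ≤ a) (t : R) :
    attainableAccuracies a t =
      if t ≤ 1 - a then Set.Icc (1 - a - t) (1 - a + t)
      else if t ≤ a then Set.Icc (t + a - 1) (1 - a + t)
      else Set.Icc (t + a - 1) (1 + a - t) := by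
  split_ifs with h_low h_mid
  · exact attainableAccuracies_of_le_one_sub ha h_low
  · exact attainableAccuracies_of_one_sub_le_of_le (le_of_not_ge h_low) h_mid
  · exact attainableAccuracies_of_le ha (le_of_not_ge h_mid)

theorem stmt_8_general (ha : 1 - a ≤ a) (S : R → Set R)
    (hS : ∀ t : R, S t =
      if t ≤ 1 - a then Set.Icc (1 - a - t) (1 - a + t)
      else if t ≤ a then Set.Icc (t + a - 1) (1 - a + t)
      else Set.Icc (t + a - 1) (1 + a - t))
    (A x : R) : x ∈ S A ↔ A ∈ S x := by
  have hS_eq (t : R) : S t = attainableAccuracies a t :=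
    (hS t).trans (attainableAccuracies_eq_ite ha t).symm
  rw [hS_eq, hS_eq, mem_attainableAccuracies_comm]

end AttainableAccuracies

theorem stmt_8 (AccAI : ℝ) (hAIlb : 1/2 < AccAI) (hAIub : AccAI ≤ 1)
    (S : ℝ → Set ℝ)
    (hS : ∀ t : ℝ, S t =
      if t ≤ 1 - AccAI then Set.Icc (1 - AccAI - t) (1 - AccAI + t)
      else if t ≤ AccAI then Set.Icc (t + AccAI - 1) (1 - AccAI + t)
      else Set.Icc (t + AccAI - 1) (1 + AccAI - t)) :
    ∀ A x : ℝ, 0 ≤ A → A ≤ 1 → 0 ≤ x → x ≤ 1 →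
      (x ∈ S A ↔ A ∈ S x) := by
  intro A x _ _ _ _
  exact stmt_8_general (by linarith) S hS A x
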